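/- arXiv:1905.10660 — 3 statements merged into one kernel-verified Lean document; each statement's English description precedes it below -/
import Mathlib

section
/- Suppose the feasible set Ω(S, ŵ, γ, η) is nonempty and let OPT = min_{(D,α) ∈ Ω(S, ŵ, γ, η)} err(D,S). Let (D̂, α̂, λ̂, τ̂) be a v-approximate saddle point of the Lagrangian L over ΔH × [0,1]^{n²} × Λ × T, i.e., L(D̂, α̂, λ̂, τ̂) ≤ min_{D ∈ ΔH, α ∈ [0,1]^{n²}} L(D, α, λ̂, τ̂) + v and L(D̂, α̂, λ̂, τ̂) ≥ max_{λ ∈ Λ, τ ∈ T} L(D̂, α̂, λ, τ) − v. Then: (1) err(D̂, S) ≤ OPT + 2v; (2) for every (i,j) ∈ [n]², E_{h∼D̂}[h(x_i) − h(x_j)] ≤ α̂_{ij} + γ + (1 + 2v)/C_λ; and (3) (1/|A|) Σ_{(i,j)∈[n]²} ŵ_{ij} α̂_{ij} ≤ η + (1 + 2v)/C_τ. -/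
/-!
Weak duality: at a feasible `(D, α)` every constraint term of the Lagrangian is nonpositive, so
`L(D, α, lamhat, τhat) ≤ err(D)`. Chaining the two saddle inequalities gives
`L(Dhat, αhat, lam, τ) ≤ err(D) + 2v` for all admissible multipliers `(lam, τ)`. The three claims
are this bound at `(0, 0)`, at `(Pi.single p Clam, 0)` and at `(0, Ctau)`, the last two combined
with `0 ≤ err(Dhat)` and `err(D) ≤ 1`.
-/

open scoped BigOperators Classical

noncomputable section

/-- Numeric value of a binary prediction. -/
def bval (b : Bool) : ℝ := if b then 1 else 0

/-- `E_{h ∼ D}[h(x) - h(x')]` for a distribution `D` over a hypothesis class `H`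
whose members are interpreted as binary classifiers via `f`. -/
def expDiff {X H : Type*} (D : PMF H) (f : H → X → Bool) (x x' : X) : ℝ :=
  ∑' h, (D h).toReal * (bval (f h x) - bval (f h x'))

/-- Expected empirical error `err(D, S) = (1/n) Σ_i Pr_{h∼D}[h(x_i) ≠ y_i]`. -/
def errD {X H : Type*} {n : ℕ} (D : PMF H) (f : H → X → Bool)
    (x : Fin n → X) (y : Fin n → Bool) : ℝ :=
  (1 / (n : ℝ)) * ∑ i : Fin n, ∑' h, (D h).toReal * (if f h (x i) = y i then (0 : ℝ) else 1)

/-- The Lagrangian `L(D, α, λ, τ)` of the fair ERM problem. -/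
def Lag {X H : Type*} {n : ℕ} (f : H → X → Bool) (x : Fin n → X) (y : Fin n → Bool)
    (w : Fin n × Fin n → ℝ) (A : Finset (Fin n × Fin n)) (γ η : ℝ)
    (D : PMF H) (α lam : Fin n × Fin n → ℝ) (τ : ℝ) : ℝ :=
  errD D f x y
    + ∑ p : Fin n × Fin n, lam p * (expDiff D f (x p.1) (x p.2) - α p - γ)
    + τ * ((1 / (A.card : ℝ)) * ∑ p : Fin n × Fin n, w p * α p - η)

/-- Membership in the feasible set `Ω(S, ŵ, γ, η)` of the fair ERM problem. -/
def Feasible {X H : Type*} {n : ℕ} (f : H → X → Bool) (x : Fin n → X)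
    (w : Fin n × Fin n → ℝ) (A : Finset (Fin n × Fin n)) (γ η : ℝ)
    (D : PMF H) (α : Fin n × Fin n → ℝ) : Prop :=
  (∀ p, α p ∈ Set.Icc (0 : ℝ) 1) ∧
  (∀ p : Fin n × Fin n, expDiff D f (x p.1) (x p.2) ≤ α p + γ) ∧
  (1 / (A.card : ℝ)) * ∑ p : Fin n × Fin n, w p * α p ≤ η

/-- The inner series is dominated by the total mass `∑' h, D h = 1`. -/
lemma errD_le_one {X H : Type*} {n : ℕ} (D : PMF H) (f : H → X → Bool)
    (x : Fin n → X) (y : Fin n → Bool) : errD D f x y ≤ 1 := by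
  have hs : Summable fun h => (D h).toReal := ENNReal.summable_toReal D.tsum_coe_ne_top
  have h1 : ∑' h, (D h).toReal = 1 := by
    rw [← ENNReal.tsum_toReal_eq D.apply_ne_top, D.tsum_coe, ENNReal.toReal_one]
  have hle : ∀ i h, (D h).toReal * (if f h (x i) = y i then (0 : ℝ) else 1) ≤ (D h).toReal := by
    intro i h
    split_ifs <;> simp
  have hi : ∀ i, ∑' h, (D h).toReal * (if f h (x i) = y i then (0 : ℝ) else 1) ≤ 1 := by
    intro i
    refine (Summable.tsum_le_tsum (hle i)
      (Summable.of_nonneg_of_le (fun h => ?_) (hle i) hs) hs).trans_eq h1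
    split_ifs <;> simp
  unfold errD
  calc _ ≤ (1 / (n : ℝ)) * ∑ _i : Fin n, (1 : ℝ) := by
        gcongr with i
        exact hi i
    _ ≤ 1 := by
        simpa using inv_mul_le_one (a := (n : ℝ))

lemma errD_nonneg {X H : Type*} {n : ℕ} (D : PMF H) (f : H → X → Bool)
    (x : Fin n → X) (y : Fin n → Bool) : 0 ≤ errD D f x y := by
  unfold errD
  refine mul_nonneg (by positivity) (Finset.sum_nonneg fun i _ => tsum_nonneg fun h => ?_)
  split_ifs <;> simp

/-- Weak duality: nonnegative multipliers only lower the objective at a feasible point. -/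
lemma Lag_le_errD {X H : Type*} {n : ℕ} {f : H → X → Bool} {x : Fin n → X} (y : Fin n → Bool)
    {w : Fin n × Fin n → ℝ} {A : Finset (Fin n × Fin n)} {γ η : ℝ}
    {D : PMF H} {α lam : Fin n × Fin n → ℝ} {τ : ℝ} (h : Feasible f x w A γ η D α)
    (hlam : ∀ p, 0 ≤ lam p) (hτ : 0 ≤ τ) : Lag f x y w A γ η D α lam τ ≤ errD D f x y := by
  obtain ⟨-, h2, h3⟩ := h
  have hsum : ∑ p : Fin n × Fin n, lam p * (expDiff D f (x p.1) (x p.2) - α p - γ) ≤ 0 :=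
    Finset.sum_nonpos fun p _ =>
      mul_nonpos_of_nonneg_of_nonpos (hlam p) (by linarith [h2 p])
  have hagg := mul_nonpos_of_nonneg_of_nonpos hτ (sub_nonpos.2 h3)
  unfold Lag
  linarith

/-- a `v`-approximate saddle point `(D̂, α̂, λ̂, τ̂)` of the Lagrangian has
near-optimal error (`err(D̂,S) ≤ OPT + 2v`) and approximately satisfies the constraints. -/
theorem approx_saddle_point_guarantee {X H : Type*} {n : ℕ} (hn : 0 < n)
    (x : Fin n → X) (y : Fin n → Bool) (f : H → X → Bool)
    (w : Fin n × Fin n → ℝ) (hw : ∀ p, w p ∈ Set.Icc (0 : ℝ) 1)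
    (A : Finset (Fin n × Fin n)) (hA : A.Nonempty)
    (γ η : ℝ) (hγ : γ ∈ Set.Icc (0 : ℝ) 1) (hη : η ∈ Set.Icc (0 : ℝ) 1)
    (Clam Ctau : ℝ) (hClam : 0 < Clam) (hCtau : 0 < Ctau)
    -- the feasible set is nonempty
    (hfeas : ∃ (D₀ : PMF H) (α₀ : Fin n × Fin n → ℝ), Feasible f x w A γ η D₀ α₀)
    (v : ℝ) (hv : 0 ≤ v)
    (Dhat : PMF H) (αhat : Fin n × Fin n → ℝ) (hαhat : ∀ p, αhat p ∈ Set.Icc (0 : ℝ) 1)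
    (lamhat : Fin n × Fin n → ℝ) (hlamhat : ∀ p, 0 ≤ lamhat p)
    (hlamhat1 : (∑ p : Fin n × Fin n, lamhat p) ≤ Clam)
    (τhat : ℝ) (hτhat : τhat ∈ Set.Icc (0 : ℝ) Ctau)
    -- `(D̂, α̂, λ̂, τ̂)` is a `v`-approximate saddle point
    (hsaddle1 : ∀ (D : PMF H) (α : Fin n × Fin n → ℝ), (∀ p, α p ∈ Set.Icc (0 : ℝ) 1) →
        Lag f x y w A γ η Dhat αhat lamhat τhat ≤ Lag f x y w A γ η D α lamhat τhat + v)
    (hsaddle2 : ∀ (lam : Fin n × Fin n → ℝ) (τ : ℝ), (∀ p, 0 ≤ lam p) →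
        (∑ p : Fin n × Fin n, lam p) ≤ Clam → τ ∈ Set.Icc (0 : ℝ) Ctau →
        Lag f x y w A γ η Dhat αhat lam τ - v ≤ Lag f x y w A γ η Dhat αhat lamhat τhat) :
    -- (1) near-optimal error: err(D̂,S) ≤ OPT + 2v
    (∀ (D : PMF H) (α : Fin n × Fin n → ℝ), Feasible f x w A γ η D α →
        errD Dhat f x y ≤ errD D f x y + 2 * v)
    -- (2) pairwise constraints approximately satisfied
    ∧ (∀ p : Fin n × Fin n,
        expDiff Dhat f (x p.1) (x p.2) ≤ αhat p + γ + (1 + 2 * v) / Clam)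
    -- (3) aggregate constraint approximately satisfied
    ∧ (1 / (A.card : ℝ)) * ∑ p : Fin n × Fin n, w p * αhat p
        ≤ η + (1 + 2 * v) / Ctau := by
  have key : ∀ (D : PMF H) (α : Fin n × Fin n → ℝ), Feasible f x w A γ η D α →
      ∀ (lam : Fin n × Fin n → ℝ) (τ : ℝ), (∀ p, 0 ≤ lam p) →
        (∑ p : Fin n × Fin n, lam p) ≤ Clam → τ ∈ Set.Icc (0 : ℝ) Ctau →
        Lag f x y w A γ η Dhat αhat lam τ ≤ errD D f x y + 2 * v := by
    intro D α hF lam τ hl hl1 hτ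
    linarith [hsaddle1 D α hF.1, hsaddle2 lam τ hl hl1 hτ, Lag_le_errD y hF hlamhat hτhat.1]
  obtain ⟨D₀, α₀, hF₀⟩ := hfeas
  have h0 := errD_nonneg Dhat f x y
  have h1 := errD_le_one D₀ f x y
  refine ⟨fun D α hF => ?_, fun p => ?_, ?_⟩
  · simpa [Lag] using key D α hF 0 0 (by simp) (by simpa using hClam.le) ⟨le_rfl, hCtau.le⟩
  · have hk := key D₀ α₀ hF₀ (Pi.single p Clam) 0
      (fun q => (Pi.single_nonneg.2 hClam.le : (0 : Fin n × Fin n → ℝ) ≤ _) q)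
      (by simp) ⟨le_rfl, hCtau.le⟩
    simp only [Lag, Pi.single_apply, ite_mul, zero_mul, Finset.sum_ite_eq', Finset.mem_univ,
      if_true, add_zero] at hk
    have : expDiff Dhat f (x p.1) (x p.2) - αhat p - γ ≤ (1 + 2 * v) / Clam := by
      rw [le_div_iff₀ hClam]
      linarith
    linarith
  · have hk := key D₀ α₀ hF₀ 0 Ctau (by simp) (by simpa using hClam.le) ⟨hCtau.le, le_rfl⟩
    simp only [Lag, Pi.zero_apply, zero_mul, Finset.sum_const_zero, add_zero] at hk
    have : (1 / (A.card : ℝ)) * ∑ p : Fin n × Fin n, w p * αhat p - η ≤ (1 + 2 * v) / Ctau := by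
      rw [le_div_iff₀ hCtau]
      linarith
    linarith
end
end

section
/- Fix a data sample S = (x_1, …, x_n), a class H of binary classifiers, and ε' > 0. Then for every distribution D over H there exist hypotheses h_1, …, h_k ∈ H with k = ⌈2·ln(2n²)/ε'²⌉ + 1 such that the uniform mixture D̂ over {h_1, …, h_k} satisfies, for every pair (x, x') ∈ S × S, |E_{h∼D}[h(x) − h(x')] − (1/k)·Σ_{i=1}^k (h_i(x) − h_i(x'))| ≤ ε'. -/
/-!
Draw `k` hypotheses independently from `D`. For a fixed pair `(x, x')` the differences
`h(x) - h(x')` lie in `[-1, 1]`, so Hoeffding's inequality (`measure_sum_deviation_le`) bounds the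
probability that their sum exceeds its mean by `k ε'` or more by `exp (-k ε'² / 2)`. A deviation
below the mean for `(x, x')` is a deviation above the mean for `(x', x)`, so the `n²` one-sided
events indexed by ordered pairs cover every way to fail. Since `k > 2 ln(2n²) / ε'²`, each has
probability less than `1 / (2n²)`; by the union bound some draw avoids all of them.
-/

open scoped BigOperators Classical

noncomputable section

open MeasureTheory ProbabilityTheory

/-- One-sided Hoeffding bound for `k` independent draws from a `PMF`, with the mean written as the
explicit sum that occurs in `expDiff`. -/
lemma measure_sum_deviation_le {H : Type*} [MeasurableSpace H] [DiscreteMeasurableSpace H]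
    (D : PMF H) (g : H → ℝ) (hg : ∀ h, g h ∈ Set.Icc (-1 : ℝ) 1) (k : ℕ) (hk : 0 < k)
    {ε : ℝ} (hε : 0 < ε) :
    (Measure.pi fun _ : Fin k => D.toMeasure).real
      {hs | k * ε ≤ ∑ a, (g (hs a) - ∑' h, (D h).toReal * g h)} ≤ Real.exp (-(k * ε ^ 2 / 2)) := by
  have hm : Measurable g := Measurable.of_discrete
  have hint : Integrable g D.toMeasure :=
    Integrable.of_mem_Icc (-1) 1 hm.aemeasurable (ae_of_all _ hg)
  have hmean : ∫ h, g h ∂D.toMeasure = ∑' h, (D h).toReal * g h := by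
    simpa [smul_eq_mul] using D.integral_eq_tsum g hint
  have hsub := hasSubgaussianMGF_of_mem_Icc hm.aemeasurable (ae_of_all D.toMeasure hg)
  rw [hmean] at hsub
  set m := ∑' h, (D h).toReal * g h
  have hindep : iIndepFun (fun (a : Fin k) (hs : Fin k → H) => g (hs a) - m)
      (Measure.pi fun _ : Fin k => D.toMeasure) :=
    iIndepFun_pi (X := fun _ h => g h - m) fun _ => (hm.sub_const m).aemeasurable
  have hcoord : ∀ a ∈ (Finset.univ : Finset (Fin k)),
      HasSubgaussianMGF (fun hs : Fin k → H => g (hs a) - m) ((‖(1 : ℝ) - (-1)‖₊ / 2) ^ 2)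
        (Measure.pi fun _ : Fin k => D.toMeasure) := by
    intro a _
    have hmp := measurePreserving_eval (fun _ : Fin k => D.toMeasure) a
    rw [← hmp.map_eq] at hsub
    exact HasSubgaussianMGF.of_map hmp.measurable.aemeasurable hsub
  refine (HasSubgaussianMGF.measure_sum_ge_le_of_iIndepFun hindep hcoord
    (by positivity : 0 ≤ (k : ℝ) * ε)).trans (le_of_eq ?_)
  -- the variance proxy of a variable in `[-1, 1]` is `((1 - (-1)) / 2)² = 1`
  have hc : (((‖(1 : ℝ) - (-1)‖₊ / 2) ^ 2 : NNReal) : ℝ) = 1 := by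
    push_cast
    norm_num
  have hk' : (k : ℝ) ≠ 0 := by positivity
  simp only [Finset.sum_const, Finset.card_univ, Fintype.card_fin, NNReal.coe_nsmul, hc]
  congr 1
  simp only [nsmul_eq_mul, mul_one]
  field_simp

lemma bval_sub_mem_Icc (b c : Bool) : bval b - bval c ∈ Set.Icc (-1 : ℝ) 1 := by
  cases b <;> cases c <;> simp [bval]

lemma expDiff_swap {X H : Type*} (D : PMF H) (f : H → X → Bool) (x x' : X) :
    expDiff D f x' x = -expDiff D f x x' := by
  unfold expDiff
  rw [← tsum_neg]
  exact tsum_congr fun h => by ring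

/-- sparsification / ε-net lemma.  For a fixed sample `S = (x_1, …, x_n)`
and any distribution `D` over `H`, there is a uniform mixture of
`k = ⌈2·ln(2n²)/ε'²⌉ + 1` hypotheses whose prediction differences are uniformly
`ε'`-close to those of `D` on every pair from `S × S`. -/
theorem sparse_approximation_of_mixture {X H : Type*} {n : ℕ}
    (S : Fin n → X) (f : H → X → Bool) (ε' : ℝ) (hε' : 0 < ε') (D : PMF H) :
    ∃ hs : Fin (⌈2 * Real.log (2 * (n : ℝ) ^ 2) / ε' ^ 2⌉₊ + 1) → H,
      ∀ i j : Fin n,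
        |expDiff D f (S i) (S j)
          - (1 / ((⌈2 * Real.log (2 * (n : ℝ) ^ 2) / ε' ^ 2⌉₊ + 1 : ℕ) : ℝ)) *
              ∑ a, (bval (f (hs a) (S i)) - bval (f (hs a) (S j)))| ≤ ε' := by
  have hkbig : 2 * Real.log (2 * (n : ℝ) ^ 2) / ε' ^ 2
      < ((⌈2 * Real.log (2 * (n : ℝ) ^ 2) / ε' ^ 2⌉₊ + 1 : ℕ) : ℝ) := by
    push_cast
    exact (Nat.le_ceil _).trans_lt (lt_add_one _)
  have hk : 0 < ⌈2 * Real.log (2 * (n : ℝ) ^ 2) / ε' ^ 2⌉₊ + 1 := Nat.succ_pos _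
  generalize ⌈2 * Real.log (2 * (n : ℝ) ^ 2) / ε' ^ 2⌉₊ + 1 = k at hkbig hk ⊢
  have hkR : (0 : ℝ) < k := by exact_mod_cast hk
  rcases Nat.eq_zero_or_pos n with rfl | hn
  · obtain ⟨h, _⟩ := D.support_nonempty
    exact ⟨fun _ => h, fun i => i.elim0⟩
  let _ : MeasurableSpace H := ⊤
  have : DiscreteMeasurableSpace H := ⟨fun _ => trivial⟩
  let μ := Measure.pi fun _ : Fin k => D.toMeasure
  let bad : Fin n × Fin n → Set (Fin k → H) := fun p =>
    {hs | k * ε' ≤ ∑ a, ((bval (f (hs a) (S p.1)) - bval (f (hs a) (S p.2)))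
      - expDiff D f (S p.1) (S p.2))}
  have hbad : ∀ p, μ.real (bad p) ≤ Real.exp (-(k * ε' ^ 2 / 2)) := fun p =>
    measure_sum_deviation_le D (fun h => bval (f h (S p.1)) - bval (f h (S p.2)))
      (fun h => bval_sub_mem_Icc _ _) k hk hε'
  have hn2 : (0 : ℝ) < 2 * (n : ℝ) ^ 2 := by positivity
  have hexp : Real.exp (-(k * ε' ^ 2 / 2)) < (2 * (n : ℝ) ^ 2)⁻¹ := by
    rw [← Real.exp_log hn2, ← Real.exp_neg, Real.exp_lt_exp]
    rw [div_lt_iff₀ (by positivity)] at hkbig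
    linarith
  have hunion : μ.real (⋃ p, bad p) < 1 := by
    calc μ.real (⋃ p, bad p) ≤ ∑ p, μ.real (bad p) := measureReal_iUnion_fintype_le _
      _ ≤ ∑ _p : Fin n × Fin n, (2 * (n : ℝ) ^ 2)⁻¹ :=
        Finset.sum_le_sum fun p _ => (hbad p).trans hexp.le
      _ = 1 / 2 := by
        simp only [Finset.sum_const, Finset.card_univ, Fintype.card_prod, Fintype.card_fin,
          nsmul_eq_mul]
        push_cast
        field_simp
      _ < 1 := by norm_num
  obtain ⟨hs, hgood⟩ : ∃ hs, hs ∉ ⋃ p, bad p := by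
    by_contra! hall
    rw [Set.eq_univ_of_forall hall, probReal_univ] at hunion
    exact lt_irrefl _ hunion
  simp only [Set.mem_iUnion, not_exists] at hgood
  -- every ordered pair satisfies the upper bound on the empirical mean
  have hupper : ∀ i j, (1 / (k : ℝ)) * ∑ a, (bval (f (hs a) (S i)) - bval (f (hs a) (S j)))
      - expDiff D f (S i) (S j) < ε' := by
    intro i j
    have h := hgood (i, j)
    simp only [bad, Set.mem_ofPred_eq, not_le] at h
    rw [Finset.sum_sub_distrib, Finset.sum_const, Finset.card_univ, Fintype.card_fin,
      nsmul_eq_mul] at h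
    rw [one_div, inv_mul_eq_div, sub_lt_iff_lt_add, div_lt_iff₀ hkR]
    linarith
  refine ⟨hs, fun i j => ?_⟩
  have h₁ := hupper i j
  -- the lower bound for `(i, j)` is the upper bound for `(j, i)`
  have h₂ := hupper j i
  have hswap : ∑ a, (bval (f (hs a) (S j)) - bval (f (hs a) (S i)))
      = -∑ a, (bval (f (hs a) (S i)) - bval (f (hs a) (S j))) := by
    rw [← Finset.sum_neg_distrib]
    exact Finset.sum_congr rfl fun a _ => by ring
  rw [expDiff_swap, hswap, mul_neg] at h₂
  rw [abs_le]
  constructor <;> linarith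
end
end

section
/- Fix a data sample S = (x_1, …, x_n), a class H of binary classifiers, a symmetric weight function w : X × X → [0,1], γ ∈ [0,1], and ε' > 0. Then for every distribution D over H there exists a uniform mixture D̂ over k = ⌈2·ln(2n²)/ε'²⌉ + 1 hypotheses h_1, …, h_k ∈ H such that |Π_{D,w,γ}(S × S) − Π_{D̂,w,γ}(S × S)| ≤ ε'. -/
/-!
The proof is Maurey's empirical (second moment) method, derandomised. Write
`g_p(h) = h(x) - h(x') ∈ [-1,1]` for a pair `p = (x, x')` of sample points and
`μ_p = E_{h ∼ D}[g_p(h)]`. Hypotheses are picked greedily: if `v_p` is the current value of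
`∑_a (g_p(h_a) - μ_p)`, then for `h ∼ D` the cross terms in `∑_p (v_p + g_p(h) - μ_p)²` average
to zero and the variances are at most one, so some `h` raises the sum by at most the number of
pairs (`exists_small_deviation`). After `k` steps the mean over the `n²` pairs of the squared
deviation is at most `1/k`, and Cauchy–Schwarz bounds the mean absolute deviation by `1/√k`.
The loss is 1-Lipschitz in the deviations, so `k ≥ 1/ε'²` suffices; the prescribed `k` is at
least that large because `2 ln 2 ≥ 1`. Averaging over the pairs rather than controlling all of
them simultaneously makes a union bound unnecessary.
-/

open scoped BigOperators Classical

noncomputable section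

/-- The `γ`-fairness loss of a pair. -/
def pairLoss {X H : Type*} (D : PMF H) (f : H → X → Bool)
    (w : X → X → ℝ) (γ : ℝ) (x x' : X) : ℝ :=
  w x x' * max 0 (|expDiff D f x x'| - γ)

/-- The empirical `γ`-fairness loss over all pairs of a sample. -/
def empLoss {X H : Type*} (D : PMF H) (f : H → X → Bool)
    (w : X → X → ℝ) (γ : ℝ) {n : ℕ} (S : Fin n → X) : ℝ :=
  (1 / (n : ℝ) ^ 2) * ∑ i : Fin n, ∑ j : Fin n, pairLoss D f w γ (S i) (S j)

lemma PMF.hasSum_toReal_one {H : Type*} (D : PMF H) : HasSum (fun h => (D h).toReal) 1 := by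
  have h := ENNReal.hasSum_toReal D.tsum_coe_ne_top
  rwa [← ENNReal.tsum_toReal_eq D.apply_ne_top, D.tsum_coe, ENNReal.toReal_one] at h

lemma abs_bval_sub_le (a b : Bool) : |bval a - bval b| ≤ 1 := by
  cases a <;> cases b <;> simp [bval]

lemma hasSum_expDiff {X H : Type*} (D : PMF H) (f : H → X → Bool) (x x' : X) :
    HasSum (fun h => (D h).toReal * (bval (f h x) - bval (f h x'))) (expDiff D f x x') := by
  apply Summable.hasSum
  refine Summable.of_norm_bounded D.hasSum_toReal_one.summable fun h => ?_
  rw [norm_mul, Real.norm_eq_abs, Real.norm_eq_abs, abs_of_nonneg ENNReal.toReal_nonneg]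
  exact mul_le_of_le_one_right ENNReal.toReal_nonneg (abs_bval_sub_le _ _)

/-- Some point of a probability space takes a value at most the mean. -/
lemma exists_le_of_hasSum {H : Type*} (D : PMF H) (F : H → ℝ) (c : ℝ)
    (hF : HasSum (fun h => (D h).toReal * F h) c) : ∃ h, F h ≤ c := by
  by_contra! hc
  have h1 : HasSum (fun h => (D h).toReal * (F h - c)) 0 := by
    have := hF.sub (D.hasSum_toReal_one.mul_right c)
    simpa [mul_sub] using this
  have h2 := (hasSum_zero_iff_of_nonneg
    (fun h => mul_nonneg ENNReal.toReal_nonneg (sub_pos.2 (hc h)).le)).1 h1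
  have h3 : (fun h => (D h).toReal) = fun _ => 0 := by
    funext h
    exact (mul_eq_zero.1 (congrFun h2 h)).resolve_right (sub_pos.2 (hc h)).ne'
  have h4 := D.hasSum_toReal_one
  rw [h3] at h4
  exact zero_ne_one (hasSum_zero.unique h4)

/-- Greedy choice of `m` points whose deviations from the mean of finitely many functions
`g p` bounded by one behave, in `ℓ²`, as well as those of `m` independent draws do on average. -/
lemma exists_small_deviation {H ι : Type*} [Fintype ι] (D : PMF H) (g : ι → H → ℝ) (μ : ι → ℝ)
    (hg : ∀ p h, |g p h| ≤ 1) (hμ : ∀ p, HasSum (fun h => (D h).toReal * g p h) (μ p)) (m : ℕ) :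
    ∃ hs : Fin m → H, ∑ p, (∑ a, (g p (hs a) - μ p)) ^ 2 ≤ m * Fintype.card ι := by
  induction m with
  | zero => exact ⟨Fin.elim0, by simp⟩
  | succ m ih =>
    obtain ⟨hs, ih⟩ := ih
    set v : ι → ℝ := fun p => ∑ a, (g p (hs a) - μ p) with hv
    -- Replacing `g²` by `1` in `(v + g - μ)²` leaves a bound affine in `g`, whose mean is explicit.
    have hsum : HasSum (fun h => (D h).toReal *
        ∑ p, ((v p - μ p) ^ 2 + 1 + 2 * (v p - μ p) * g p h))
        (∑ p, ((v p - μ p) ^ 2 + 1 + 2 * (v p - μ p) * μ p)) := by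
      simp_rw [Finset.mul_sum]
      refine hasSum_sum fun p _ => ?_
      have := (D.hasSum_toReal_one.mul_right ((v p - μ p) ^ 2 + 1)).add
        ((hμ p).mul_left (2 * (v p - μ p)))
      rw [one_mul] at this
      refine (congrArg (HasSum · _) (funext fun h => ?_)).mp this
      ring
    obtain ⟨h, hh⟩ := exists_le_of_hasSum D _ _ hsum
    refine ⟨Fin.snoc hs h, ?_⟩
    calc ∑ p, (∑ a, (g p (Fin.snoc (α := fun _ => H) hs h a) - μ p)) ^ 2
        = ∑ p, (v p + (g p h - μ p)) ^ 2 := by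
          simp only [Fin.sum_univ_castSucc, Fin.snoc_castSucc, Fin.snoc_last, hv]
      _ ≤ ∑ p, ((v p - μ p) ^ 2 + 1 + 2 * (v p - μ p) * g p h) := by
          refine Finset.sum_le_sum fun p _ => ?_
          nlinarith [(sq_le_one_iff_abs_le_one _).2 (hg p h)]
      _ ≤ ∑ p, ((v p - μ p) ^ 2 + 1 + 2 * (v p - μ p) * μ p) := hh
      _ ≤ ∑ p, (v p ^ 2 + 1) := by
          refine Finset.sum_le_sum fun p _ => ?_
          nlinarith [sq_nonneg (μ p)]
      _ ≤ (m + 1 : ℕ) * Fintype.card ι := by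
          rw [Finset.sum_add_distrib]
          simp only [Finset.sum_const, Finset.card_univ, nsmul_eq_mul, mul_one]
          push_cast
          linarith

lemma expDiff_uniform {X H : Type*} (k : ℕ) (hs : Fin (k + 1) → H) (f : H → X → Bool)
    (x x' : X) :
    expDiff ((PMF.uniformOfFintype (Fin (k + 1))).bind fun a => PMF.pure (hs a)) f x x'
      = ((k + 1 : ℕ) : ℝ)⁻¹ * ∑ a, (bval (f (hs a) x) - bval (f (hs a) x')) := by
  have h1 : ∀ h, (((PMF.uniformOfFintype (Fin (k + 1))).bind fun a => PMF.pure (hs a)) h).toReal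
      = ∑ a, ((k + 1 : ℕ) : ℝ)⁻¹ * (if h = hs a then 1 else 0) := by
    intro h
    rw [PMF.bind_apply, tsum_fintype, ENNReal.toReal_sum]
    · refine Finset.sum_congr rfl fun a _ => ?_
      rw [PMF.uniformOfFintype_apply, PMF.pure_apply, ENNReal.toReal_mul, ENNReal.toReal_inv,
        Fintype.card_fin, ENNReal.toReal_natCast]
      split_ifs <;> simp
    · intro a _
      exact ENNReal.mul_ne_top (PMF.apply_ne_top _ _) (PMF.apply_ne_top _ _)
  unfold expDiff
  simp_rw [h1, Finset.sum_mul, Finset.mul_sum]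
  refine HasSum.tsum_eq (hasSum_sum fun a _ => ?_)
  convert hasSum_single (hs a) (f := fun h => ((k + 1 : ℕ) : ℝ)⁻¹ * (if h = hs a then 1 else 0) *
    (bval (f h x) - bval (f h x'))) (fun h hne => by simp [hne]) using 1
  simp

lemma abs_pairLoss_sub_le {X H : Type*} (D D' : PMF H) (f : H → X → Bool)
    (w : X → X → ℝ) (hw : ∀ x x', w x x' ∈ Set.Icc (0 : ℝ) 1) (γ : ℝ) (x x' : X) :
    |pairLoss D f w γ x x' - pairLoss D' f w γ x x'|
      ≤ |expDiff D f x x' - expDiff D' f x x'| := by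
  unfold pairLoss
  rw [← mul_sub, abs_mul, abs_of_nonneg (hw x x').1]
  refine (mul_le_of_le_one_left (abs_nonneg _) (hw x x').2).trans ?_
  rw [max_comm 0, max_comm 0]
  refine (abs_max_sub_max_le_abs _ _ _).trans ?_
  rw [sub_sub_sub_cancel_right]
  exact abs_abs_sub_abs_le _ _

/-- The prescribed number of hypotheses is at least `1/ε'²`, because `2 ln 2 ≥ 1`. -/
lemma one_le_count_mul_sq {n : ℕ} (hn : 0 < n) {ε : ℝ} (hε : 0 < ε) :
    1 ≤ ((⌈2 * Real.log (2 * (n : ℝ) ^ 2) / ε ^ 2⌉₊ + 1 : ℕ) : ℝ) * ε ^ 2 := by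
  have h1 : 2 * Real.log (2 * (n : ℝ) ^ 2) / ε ^ 2
      ≤ ((⌈2 * Real.log (2 * (n : ℝ) ^ 2) / ε ^ 2⌉₊ + 1 : ℕ) : ℝ) := by
    push_cast
    linarith [Nat.le_ceil (2 * Real.log (2 * (n : ℝ) ^ 2) / ε ^ 2)]
  rw [div_le_iff₀ (by positivity)] at h1
  have h2 : Real.log 2 ≤ Real.log (2 * (n : ℝ) ^ 2) := by
    apply Real.log_le_log (by norm_num)
    have : (1 : ℝ) ≤ n := by exact_mod_cast hn
    nlinarith
  linarith [Real.log_two_gt_d9]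

/-- for a fixed sample `S`, every distribution `D` over `H` admits a
uniform mixture `D̂` of `k = ⌈2·ln(2n²)/ε'²⌉ + 1` hypotheses whose empirical fairness
loss over `S × S` is `ε'`-close to that of `D`. -/
theorem sparse_approximation_of_fairness_loss {X H : Type*} {n : ℕ}
    (S : Fin n → X) (f : H → X → Bool)
    (w : X → X → ℝ) (hw : ∀ x x', w x x' ∈ Set.Icc (0 : ℝ) 1)
    (hsym : ∀ x x', w x x' = w x' x)
    (γ : ℝ) (hγ : γ ∈ Set.Icc (0 : ℝ) 1)
    (ε' : ℝ) (hε' : 0 < ε') (D : PMF H) :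
    ∃ hs : Fin (⌈2 * Real.log (2 * (n : ℝ) ^ 2) / ε' ^ 2⌉₊ + 1) → H,
      |empLoss D f w γ S
        - empLoss ((PMF.uniformOfFintype
            (Fin (⌈2 * Real.log (2 * (n : ℝ) ^ 2) / ε' ^ 2⌉₊ + 1))).bind
              fun a => PMF.pure (hs a)) f w γ S| ≤ ε' := by
  rcases Nat.eq_zero_or_pos n with rfl | hn
  · obtain ⟨h, -⟩ := D.support_nonempty
    exact ⟨fun _ => h, by simpa [empLoss] using hε'.le⟩
  have hk := one_le_count_mul_sq hn hε'
  generalize ⌈2 * Real.log (2 * (n : ℝ) ^ 2) / ε' ^ 2⌉₊ = k at hk ⊢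
  obtain ⟨hs, hhs⟩ := exists_small_deviation (ι := Fin n × Fin n) D
    (fun p h => bval (f h (S p.1)) - bval (f h (S p.2)))
    (fun p => expDiff D f (S p.1) (S p.2))
    (fun p h => abs_bval_sub_le _ _) (fun p => hasSum_expDiff D f _ _) (k + 1)
  refine ⟨hs, ?_⟩
  set D' := (PMF.uniformOfFintype (Fin (k + 1))).bind fun a => PMF.pure (hs a) with hD'
  set K : ℝ := ((k + 1 : ℕ) : ℝ) with hK
  have hKpos : 0 < K := by rw [hK]; positivity
  have hnpos : (0 : ℝ) < n := by exact_mod_cast hn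
  set e : Fin n × Fin n → ℝ := fun p =>
    |expDiff D f (S p.1) (S p.2) - expDiff D' f (S p.1) (S p.2)| with he
  have hcard : (Fintype.card (Fin n × Fin n) : ℝ) = (n : ℝ) ^ 2 := by
    simp [sq]
  have hsq : K * ∑ p, e p ^ 2 ≤ (n : ℝ) ^ 2 := by
    have h1 : ∀ p : Fin n × Fin n, (∑ a, ((bval (f (hs a) (S p.1)) - bval (f (hs a) (S p.2)))
        - expDiff D f (S p.1) (S p.2))) ^ 2 = K ^ 2 * e p ^ 2 := by
      intro p
      simp only [he, sq_abs, hD', expDiff_uniform]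
      rw [Finset.sum_sub_distrib, Finset.sum_const, Finset.card_univ, Fintype.card_fin,
        nsmul_eq_mul, ← hK]
      field_simp
      ring
    rw [hcard] at hhs
    simp_rw [h1] at hhs
    rw [← Finset.mul_sum, sq, mul_assoc] at hhs
    exact le_of_mul_le_mul_left hhs hKpos
  have hsum : ∑ p, e p ≤ (n : ℝ) ^ 2 * ε' := by
    have hcs := sq_sum_le_card_mul_sum_sq (s := Finset.univ) (f := e)
    rw [Finset.card_univ, hcard] at hcs
    have h0 : 0 ≤ ∑ p, e p ^ 2 := Finset.sum_nonneg fun p _ => sq_nonneg _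
    have h2 : ∑ p, e p ^ 2 ≤ (n : ℝ) ^ 2 * ε' ^ 2 := by
      calc ∑ p, e p ^ 2 ≤ (K * ε' ^ 2) * ∑ p, e p ^ 2 := le_mul_of_one_le_left h0 hk
        _ = (K * ∑ p, e p ^ 2) * ε' ^ 2 := by ring
        _ ≤ (n : ℝ) ^ 2 * ε' ^ 2 := by gcongr
    refine le_of_abs_le (abs_le_of_sq_le_sq ?_ (by positivity))
    calc (∑ p, e p) ^ 2 ≤ (n : ℝ) ^ 2 * ∑ p, e p ^ 2 := hcs
      _ ≤ (n : ℝ) ^ 2 * ((n : ℝ) ^ 2 * ε' ^ 2) := by gcongr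
      _ = ((n : ℝ) ^ 2 * ε') ^ 2 := by ring
  unfold empLoss
  rw [← mul_sub, abs_mul, abs_of_nonneg (by positivity), one_div_mul_eq_div,
    div_le_iff₀ (by positivity), mul_comm ε']
  refine le_trans ?_ hsum
  rw [← Fintype.sum_prod_type', ← Fintype.sum_prod_type', ← Finset.sum_sub_distrib]
  exact (Finset.abs_sum_le_sum_abs _ _).trans
    (Finset.sum_le_sum fun p _ => abs_pairLoss_sub_le D D' f w hw γ _ _)
end
end
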